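/- Let q₀ be a positive real number and μ ∈ ℂ with Re μ > 0, and assume θ₂(iν) ≠ 0, θ₃(iν) ≠ 0 and θ₄(iν) ≠ 0 for every ν with Re ν > 0. Then: w₂[q₀](i/μ) = −μ² w₂[1/q₀](iμ); w₂'[q₀](i/μ) = μ⁴ w₂'[1/q₀](iμ) + 2μ³ w₂[1/q₀](iμ); w₂''[q₀](i/μ) = −μ⁶ w₂''[1/q₀](iμ) − 6μ⁵ w₂'[1/q₀](iμ) − 6μ⁴ w₂[1/q₀](iμ); w₂⁽³⁾[q₀](i/μ) = μ⁸ w₂⁽³⁾[1/q₀](iμ) + 12μ⁷ w₂''[1/q₀](iμ) + 36μ⁶ w₂'[1/q₀](iμ) + 24μ⁵ w₂[1/q₀](iμ); w₂⁽⁴⁾[q₀](i/μ) = −μ¹⁰ w₂⁽⁴⁾[1/q₀](iμ) − 20μ⁹ w₂⁽³⁾[1/q₀](iμ) − 120μ⁸ w₂''[1/q₀](iμ) − 240μ⁷ w₂'[1/q₀](iμ) − 120μ⁶ w₂[1/q₀](iμ). -/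

import Mathlib

noncomputable section

/-- The theta function with characteristics `θ[p,q](iμ)`. -/
def theta (p q μ : ℂ) : ℂ :=
  ∑' m : ℤ, Complex.exp (-(Real.pi : ℂ) * ((m : ℂ) + p) ^ 2 * μ +
    2 * (Real.pi : ℂ) * Complex.I * ((m : ℂ) + p) * q)

/-- The characteristic derivative `∂qθ[p,q](iμ)`. -/
def thetaQ (p q μ : ℂ) : ℂ :=
  2 * (Real.pi : ℂ) * Complex.I *
    ∑' m : ℤ, ((m : ℂ) + p) * Complex.exp (-(Real.pi : ℂ) * ((m : ℂ) + p) ^ 2 * μ +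
      2 * (Real.pi : ℂ) * Complex.I * ((m : ℂ) + p) * q)

/-- The n-th μ-derivative `∂μⁿθ[p,q](iμ)`, given by its absolutely convergent series. -/
def thetaD (n : ℕ) (p q μ : ℂ) : ℂ :=
  (-(Real.pi : ℂ)) ^ n *
    ∑' m : ℤ, ((m : ℂ) + p) ^ (2 * n) *
      Complex.exp (-(Real.pi : ℂ) * ((m : ℂ) + p) ^ 2 * μ +
        2 * (Real.pi : ℂ) * Complex.I * ((m : ℂ) + p) * q)

/-- The n-th μ-derivative `∂μⁿ∂qθ[p,q](iμ)`, given by its absolutely convergent series. -/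
def thetaQD (n : ℕ) (p q μ : ℂ) : ℂ :=
  2 * Complex.I * (-1 : ℂ) ^ n * (Real.pi : ℂ) ^ (n + 1) *
    ∑' m : ℤ, ((m : ℂ) + p) ^ (2 * n + 1) *
      Complex.exp (-(Real.pi : ℂ) * ((m : ℂ) + p) ^ 2 * μ +
        2 * (Real.pi : ℂ) * Complex.I * ((m : ℂ) + p) * q)

/-- The constant `C(j|n) = (−i)ⁿ n! / (2ʲ (n−2j)! (2j)!!)` with `(2j)!! = 2ʲ j!`. -/
def Ccoef (j n : ℕ) : ℂ :=
  (-Complex.I) ^ n * (n.factorial : ℂ) /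
    ((2 : ℂ) ^ j * ((n - 2 * j).factorial : ℂ) * ((2 : ℂ) ^ j * (j.factorial : ℂ)))

/-- `w₁[p,q](iμ)` of the two-parametric family. -/
def w1 (p q μ : ℂ) : ℂ :=
  -(Complex.I / 2) * theta 0 0 μ * theta 0 (1 / 2) μ * thetaQ p (q + 1 / 2) μ /
    (Complex.exp ((Real.pi : ℂ) * Complex.I * p) * theta p q μ)

/-- `w₂[p,q](iμ)` of the two-parametric family. -/
def w2 (p q μ : ℂ) : ℂ :=
  (Complex.I / 2) * theta (1 / 2) 0 μ * theta 0 (1 / 2) μ *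
    thetaQ (p + 1 / 2) (q + 1 / 2) μ /
    (Complex.exp ((Real.pi : ℂ) * Complex.I * p) * theta p q μ)

/-- `w₃[p,q](iμ)` of the two-parametric family. -/
def w3 (p q μ : ℂ) : ℂ :=
  -(1 / 2 : ℂ) * theta (1 / 2) 0 μ * theta 0 0 μ * thetaQ (p + 1 / 2) q μ / theta p q μ

/-- The conformal factor `F[p,q](iμ)` of the two-parametric family. -/
def Ftwo (Λ p q μ : ℂ) : ℂ :=
  (2 / ((Real.pi : ℂ) * Λ)) * (theta p q μ / thetaQ p q μ) ^ 2

/-- `w₁[q₀](iμ)` of the one-parametric family. -/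
def v1 (q0 μ : ℂ) : ℂ := 1 / (μ + q0) + 2 * thetaD 1 (1 / 2) 0 μ / theta (1 / 2) 0 μ

/-- `w₂[q₀](iμ)` of the one-parametric family. -/
def v2 (q0 μ : ℂ) : ℂ := 1 / (μ + q0) + 2 * thetaD 1 0 0 μ / theta 0 0 μ

/-- `w₃[q₀](iμ)` of the one-parametric family. -/
def v3 (q0 μ : ℂ) : ℂ := 1 / (μ + q0) + 2 * thetaD 1 0 (1 / 2) μ / theta 0 (1 / 2) μ

/-- The conformal factor `F[q₀](iμ) = C(μ+q₀)²` of the one-parametric family. -/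
def Fone (C q0 μ : ℂ) : ℂ := C * (μ + q0) ^ 2

/-- The Seeley–de Witt coefficient `ã₀[p,q](iμ)` of the two-parametric family. -/
def a0two (Λ p q μ : ℂ) : ℂ :=
  4 * Ftwo Λ p q μ ^ 2 * w1 p q μ * w2 p q μ * w3 p q μ

/-- The Seeley–de Witt coefficient `ã₀[q₀](iμ)` of the one-parametric family. -/
def a0one (C q0 μ : ℂ) : ℂ :=
  4 * Fone C q0 μ ^ 2 * v1 q0 μ * v2 q0 μ * v3 q0 μ

/-- The Seeley–de Witt coefficient `ã₂[p,q](iμ)` of the two-parametric family. -/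
def a2two (Λ p q μ : ℂ) : ℂ :=
  -(Ftwo Λ p q μ / 3) * (w1 p q μ ^ 2 + w2 p q μ ^ 2 + w3 p q μ ^ 2) +
  (Ftwo Λ p q μ / 6) *
    ((w1 p q μ ^ 2 * w2 p q μ ^ 2 - deriv (w3 p q) μ ^ 2) / w3 p q μ ^ 2 +
     (w1 p q μ ^ 2 * w3 p q μ ^ 2 - deriv (w2 p q) μ ^ 2) / w2 p q μ ^ 2 +
     (w2 p q μ ^ 2 * w3 p q μ ^ 2 - deriv (w1 p q) μ ^ 2) / w1 p q μ ^ 2) -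
  (Ftwo Λ p q μ / 3) *
    (deriv (w1 p q) μ * deriv (w2 p q) μ / (w1 p q μ * w2 p q μ) +
     deriv (w1 p q) μ * deriv (w3 p q) μ / (w1 p q μ * w3 p q μ) +
     deriv (w2 p q) μ * deriv (w3 p q) μ / (w2 p q μ * w3 p q μ)) +
  (Ftwo Λ p q μ / 3) *
    (iteratedDeriv 2 (w1 p q) μ / w1 p q μ + iteratedDeriv 2 (w2 p q) μ / w2 p q μ +
     iteratedDeriv 2 (w3 p q) μ / w3 p q μ) -
  deriv (Ftwo Λ p q) μ ^ 2 / (2 * Ftwo Λ p q μ) + iteratedDeriv 2 (Ftwo Λ p q) μ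

/-!
The functional equation `θ₃(i/μ) = √μ θ₃(iμ)` says that `2 ∂μ log θ₃` transforms like a weight-two
form up to the inhomogeneous term `-μ`, and `1 / (μ + q₀)` produces exactly the opposite defect when
`q₀` is replaced by `1/q₀`. Hence `w₂[q₀](x) = -x⁻² w₂[1/q₀](x⁻¹)`, and the derivatives come from
the closed formula for the `n`-th derivative of `x ↦ x⁻ᵐ g(x⁻¹)`, whose coefficients are generalized
Lah numbers.
-/

section InversionDerivatives

open Finset Topology

/-- The coefficient `(n choose k) (m + k) (m + k + 1) ⋯ (m + n - 1)` of
`x⁻¹ ^ (m + n + k) g⁽ᵏ⁾(x⁻¹)` in the `n`-th derivative of `x⁻¹ ^ m g(x⁻¹)`, up to the sign `(-1)ⁿ`.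
The classical (unsigned) Lah numbers are the case `m = 0`. -/
def lah (m n k : ℕ) : ℕ :=
  n.choose k * (m + k).ascFactorial (n - k)

lemma lah_eq_zero_of_lt (m : ℕ) {n k : ℕ} (h : n < k) : lah m n k = 0 := by
  rw [lah, Nat.choose_eq_zero_of_lt h, zero_mul]

lemma lah_succ_zero (m n : ℕ) : lah m (n + 1) 0 = (m + n) * lah m n 0 := by
  simp only [lah, Nat.choose_zero_right, one_mul, add_zero, Nat.sub_zero, Nat.ascFactorial_succ]

lemma lah_succ_succ (m n k : ℕ) :
    lah m (n + 1) (k + 1) = (m + n + (k + 1)) * lah m n (k + 1) + lah m n k := by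
  rcases lt_trichotomy n k with h | rfl | h
  · simp only [lah_eq_zero_of_lt m h, lah_eq_zero_of_lt m (Nat.lt_succ_of_lt h),
      lah_eq_zero_of_lt m (Nat.succ_lt_succ h), mul_zero, add_zero]
  · simp [lah]
  · obtain ⟨d, rfl⟩ := Nat.exists_eq_add_of_lt h
    have hasc : (m + k).ascFactorial (d + 1) = (m + k) * (m + (k + 1)).ascFactorial d :=
      Nat.ascFactorial_succ.trans (Nat.succ_ascFactorial (m + k) d).symm
    have hchoose := Nat.choose_succ_right_eq (k + d + 1) k
    rw [show k + d + 1 - k = d + 1 by lia] at hchoose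
    rw [lah, lah, lah, Nat.choose_succ_succ', show k + d + 1 + 1 - (k + 1) = d + 1 by lia,
      show k + d + 1 - (k + 1) = d by lia, show k + d + 1 - k = d + 1 by lia, hasc,
      Nat.ascFactorial_succ]
    linear_combination (m + (k + 1)).ascFactorial d * hchoose.symm

variable {𝕜 E : Type*} [NontriviallyNormedField 𝕜] [NormedAddCommGroup E] [NormedSpace 𝕜 E]

lemma hasDerivAt_inv_pow_smul_comp_inv (p : ℕ) {g : 𝕜 → E} {g' : E} {x : 𝕜} (hx : x ≠ 0)
    (hg : HasDerivAt g g' x⁻¹) :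
    HasDerivAt (fun y => y⁻¹ ^ p • g y⁻¹)
      (-((p : 𝕜) • x⁻¹ ^ (p + 1) • g x⁻¹ + x⁻¹ ^ (p + 2) • g')) x := by
  have hinv := hasDerivAt_inv hx
  refine ((hinv.fun_pow p).fun_smul (hg.scomp x hinv)).congr_deriv ?_
  rcases p with _ | p
  · simp
  · simp only [Function.comp_apply, Nat.add_sub_cancel, Nat.cast_add, Nat.cast_one]
    module

lemma hasDerivAt_iteratedDeriv_of_analyticAt [CompleteSpace E] {g : 𝕜 → E} {x : 𝕜}
    (hg : AnalyticAt 𝕜 g x) (n : ℕ) :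
    HasDerivAt (iteratedDeriv n g) (iteratedDeriv (n + 1) g x) x := by
  rw [iteratedDeriv_succ, iteratedDeriv_eq_iterate]
  exact (hg.iterated_deriv n).differentiableAt.hasDerivAt

lemma sum_lah_succ_smul (m n : ℕ) (y : 𝕜) (a : ℕ → E) :
    ∑ k ∈ range (n + 2), (lah m (n + 1) k : 𝕜) • y ^ (m + (n + 1) + k) • a k =
      ∑ k ∈ range (n + 1), (lah m n k : 𝕜) •
        (((m + n + k : ℕ) : 𝕜) • y ^ (m + n + k + 1) • a k + y ^ (m + n + k + 2) • a (k + 1)) := by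
  have hextend :
      ∑ k ∈ range (n + 1), (((m + n + k) * lah m n k : ℕ) : 𝕜) • y ^ (m + n + k + 1) • a k =
        ∑ k ∈ range (n + 2), (((m + n + k) * lah m n k : ℕ) : 𝕜) • y ^ (m + n + k + 1) • a k := by
    rw [sum_range_succ _ (n + 1), lah_eq_zero_of_lt m n.lt_succ_self]
    simp
  calc
    _ = ∑ k ∈ range (n + 1), (((m + n + (k + 1)) * lah m n (k + 1) : ℕ) : 𝕜) •
            y ^ (m + n + (k + 1) + 1) • a (k + 1) +
          (((m + n + 0) * lah m n 0 : ℕ) : 𝕜) • y ^ (m + n + 0 + 1) • a 0 +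
        ∑ k ∈ range (n + 1), (lah m n k : 𝕜) • y ^ (m + n + k + 2) • a (k + 1) := by
      rw [sum_range_succ', add_right_comm (∑ k ∈ range (n + 1), _), ← sum_add_distrib,
        lah_succ_zero]
      congr 1
      refine sum_congr rfl fun k _ => ?_
      rw [lah_succ_succ]
      push_cast
      module
    _ = ∑ k ∈ range (n + 1), (((m + n + k) * lah m n k : ℕ) : 𝕜) • y ^ (m + n + k + 1) • a k +
        ∑ k ∈ range (n + 1), (lah m n k : 𝕜) • y ^ (m + n + k + 2) • a (k + 1) := by
      rw [hextend, sum_range_succ' _ (n + 1)]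
    _ = _ := by
      rw [← sum_add_distrib]
      refine sum_congr rfl fun k _ => ?_
      push_cast
      module

theorem iteratedDeriv_inv_pow_smul_comp_inv [CompleteSpace E] (m n : ℕ) {g : 𝕜 → E} {x : 𝕜}
    (hx : x ≠ 0) (hg : AnalyticAt 𝕜 g x⁻¹) :
    iteratedDeriv n (fun y => y⁻¹ ^ m • g y⁻¹) x =
      (-1 : 𝕜) ^ n • ∑ k ∈ range (n + 1),
        (lah m n k : 𝕜) • x⁻¹ ^ (m + n + k) • iteratedDeriv k g x⁻¹ := by
  induction n generalizing x with
  | zero => simp [lah]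
  | succ n ih =>
    have hnear : iteratedDeriv n (fun y => y⁻¹ ^ m • g y⁻¹) =ᶠ[𝓝 x] fun y =>
        (-1 : 𝕜) ^ n • ∑ k ∈ range (n + 1),
          (lah m n k : 𝕜) • y⁻¹ ^ (m + n + k) • iteratedDeriv k g y⁻¹ := by
      filter_upwards [eventually_ne_nhds hx,
        (continuousAt_inv₀ hx).eventually hg.eventually_analyticAt] with y hy hgy
      exact ih hy hgy
    have hterm (k : ℕ) := hasDerivAt_inv_pow_smul_comp_inv (m + n + k) hx
      (hasDerivAt_iteratedDeriv_of_analyticAt hg k)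
    rw [iteratedDeriv_succ, hnear.deriv_eq, sum_lah_succ_smul]
    refine ((HasDerivAt.fun_sum fun k _ =>
      (hterm k).const_smul (lah m n k : 𝕜)).const_smul ((-1 : 𝕜) ^ n)).deriv.trans ?_
    simp only [smul_neg, sum_neg_distrib, pow_succ, mul_neg, mul_one, neg_smul]

end InversionDerivatives

section ThetaInversion

open Complex Topology

lemma theta_term_eq_exp_mul_jacobiTheta₂_term (p q μ : ℂ) (m : ℤ) :
    cexp (-Real.pi * (m + p) ^ 2 * μ + 2 * Real.pi * I * (m + p) * q) =
      cexp (-Real.pi * p ^ 2 * μ + 2 * Real.pi * I * p * q) *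
        jacobiTheta₂_term m (q + I * p * μ) (I * μ) := by
  rw [jacobiTheta₂_term, ← Complex.exp_add]
  congr 1
  linear_combination (-2 * Real.pi * m * p * μ - Real.pi * m ^ 2 * μ) * I_mul_I

lemma theta_eq_exp_mul_jacobiTheta₂ (p q μ : ℂ) :
    theta p q μ = cexp (-Real.pi * p ^ 2 * μ + 2 * Real.pi * I * p * q) *
      jacobiTheta₂ (q + I * p * μ) (I * μ) := by
  rw [theta, jacobiTheta₂, ← tsum_mul_left]
  exact tsum_congr (theta_term_eq_exp_mul_jacobiTheta₂_term p q μ)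

lemma hasDerivAt_theta (p q : ℂ) {μ : ℂ} (hμ : 0 < μ.re) :
    HasDerivAt (theta p q) (thetaD 1 p q μ) μ := by
  have him : 0 < (I * μ).im := by simpa using hμ
  set z := q + I * p * μ
  set e := cexp (-Real.pi * p ^ 2 * μ + 2 * Real.pi * I * p * q)
  set D := jacobiTheta₂_fderiv z (I * μ) (I * p, I)
  have hexp : HasDerivAt (fun x => cexp (-Real.pi * p ^ 2 * x + 2 * Real.pi * I * p * q))
      (e * (-Real.pi * p ^ 2)) μ :=
    ((hasDerivAt_const_mul _).add_const _).cexp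
  have hjacobi : HasDerivAt (fun x => jacobiTheta₂ (q + I * p * x) (I * x)) D μ :=
    (hasFDerivAt_jacobiTheta₂ z him).comp_hasDerivAt (f := fun x => (q + I * p * x, I * x)) μ
      (((hasDerivAt_const_mul (I * p)).const_add q).prodMk (hasDerivAt_const_mul I))
  have hsum : HasSum (fun m : ℤ => -(Real.pi : ℂ) * ((m + p) ^ (2 * 1) *
        cexp (-Real.pi * (m + p) ^ 2 * μ + 2 * Real.pi * I * (m + p) * q)))
      (e * (-Real.pi * p ^ 2) * jacobiTheta₂ z (I * μ) + e * D) := by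
    have hD := ((hasSum_jacobiTheta₂_term_fderiv z him).mapL
      (ContinuousLinearMap.apply ℂ ℂ (I * p, I))).mul_left e
    refine (((hasSum_jacobiTheta₂_term z him).mul_left
      (e * (-Real.pi * p ^ 2))).add hD).congr_fun fun m => ?_
    have hfderiv : jacobiTheta₂_term_fderiv m z (I * μ) (I * p, I) =
        jacobiTheta₂_term m z (I * μ) * (2 * Real.pi * I * m * (I * p) + Real.pi * I * m ^ 2 * I) :=
      rfl
    rw [theta_term_eq_exp_mul_jacobiTheta₂_term, ContinuousLinearMap.apply_apply, hfderiv]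
    linear_combination
      (-Real.pi * e * jacobiTheta₂_term m z (I * μ) * (2 * m * p + m ^ 2)) * I_mul_I
  rw [thetaD, pow_one, ← tsum_mul_left, hsum.tsum_eq]
  exact (hexp.mul hjacobi).congr_of_eventuallyEq
    (.of_forall (theta_eq_exp_mul_jacobiTheta₂ p q))

lemma analyticAt_theta (p q : ℂ) {μ : ℂ} (hμ : 0 < μ.re) : AnalyticAt ℂ (theta p q) μ := by
  rw [analyticAt_iff_eventually_differentiableAt]
  filter_upwards [continuous_re.continuousAt.eventually_const_lt hμ] with x hx
  exact (hasDerivAt_theta p q hx).differentiableAt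

lemma theta_inv (p q : ℂ) {μ : ℂ} (hμ : μ ≠ 0) :
    theta p q μ⁻¹ = cexp (2 * Real.pi * I * p * q) * (μ ^ (1 / 2 : ℂ) * theta (-q) p μ) := by
  have hτ : -I * (I * μ) = μ := by linear_combination -μ * I_mul_I
  have hτ' : -1 / (I * μ) = I * μ⁻¹ := by
    field_simp
    simp
  have hz : (p + I * -q * μ) / (I * μ) = -(q + I * p * μ⁻¹) := by
    field_simp
    linear_combination p * I_mul_I
  have hsqrt : μ ^ (1 / 2 : ℂ) ≠ 0 := by simp [cpow_eq_zero_iff, hμ]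
  rw [theta_eq_exp_mul_jacobiTheta₂, theta_eq_exp_mul_jacobiTheta₂,
    jacobiTheta₂_functional_equation (p + I * -q * μ), hτ, hτ', hz, jacobiTheta₂_neg_left]
  have hexponent : -Real.pi * p ^ 2 * μ⁻¹ + 2 * Real.pi * I * p * q =
      2 * Real.pi * I * p * q + ((-Real.pi * (-q) ^ 2 * μ + 2 * Real.pi * I * -q * p) +
        -Real.pi * I * (p + I * -q * μ) ^ 2 / (I * μ)) := by
    field_simp
    linear_combination μ ^ 2 * q ^ 2 * I_mul_I
  rw [hexponent, Complex.exp_add, Complex.exp_add]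
  field_simp

lemma logDeriv_cpow_const (c : ℂ) {z : ℂ} (hz : z ∈ slitPlane) :
    logDeriv (fun w => w ^ c) z = c / z := by
  have hz0 := slitPlane_ne_zero hz
  rw [logDeriv_apply, ((hasDerivAt_id' z).cpow_const hz).deriv, cpow_sub _ _ hz0, cpow_one]
  have hpow : z ^ c ≠ 0 := by simp [cpow_eq_zero_iff, hz0]
  field_simp

lemma inv_re_pos {z : ℂ} (hz : 0 < z.re) : 0 < z⁻¹.re := by
  rw [inv_re]
  exact div_pos hz (normSq_pos.2 (ne_zero_of_re_pos hz))

lemma logDeriv_theta_inv (p q : ℂ) {μ : ℂ} (hμ : 0 < μ.re) (hθ : theta (-q) p μ ≠ 0) :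
    logDeriv (theta p q) μ⁻¹ = -μ / 2 - μ ^ 2 * logDeriv (theta (-q) p) μ := by
  have hμ0 := ne_zero_of_re_pos hμ
  have hslit : μ ∈ slitPlane := .inl hμ
  have hnear : theta p q ∘ Inv.inv =ᶠ[𝓝 μ]
      fun x => cexp (2 * Real.pi * I * p * q) * (x ^ (1 / 2 : ℂ) * theta (-q) p x) := by
    filter_upwards [eventually_ne_nhds hμ0] with x hx using theta_inv p q hx
  have h := (logDeriv_congr_nhds hnear).eq_of_nhds
  rw [logDeriv_comp (hasDerivAt_theta p q (inv_re_pos hμ)).differentiableAt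
      (differentiableAt_inv hμ0), deriv_inv, logDeriv_const_mul _ _ (exp_ne_zero _),
    logDeriv_mul _ (by simp [cpow_eq_zero_iff, hμ0]) hθ
      (differentiableAt_fun_id.cpow_const hslit)
      (hasDerivAt_theta (-q) p hμ).differentiableAt, logDeriv_cpow_const _ hslit] at h
  field_simp at h ⊢
  linear_combination -h

lemma v2_eq_add_logDeriv (q₀ : ℂ) {μ : ℂ} (hμ : 0 < μ.re) :
    v2 q₀ μ = 1 / (μ + q₀) + 2 * logDeriv (theta 0 0) μ := by
  rw [v2, logDeriv_apply, (hasDerivAt_theta 0 0 hμ).deriv, mul_div_assoc]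

lemma analyticAt_v2 {q₀ μ : ℂ} (hμ : 0 < μ.re) (hpole : μ + q₀ ≠ 0) (hθ : theta 0 0 μ ≠ 0) :
    AnalyticAt ℂ (v2 q₀) μ := by
  have hθan := analyticAt_theta 0 0 hμ
  have hlog : AnalyticAt ℂ (fun x => 1 / (x + q₀) + 2 * logDeriv (theta 0 0) x) μ :=
    (analyticAt_const.div (analyticAt_id.add analyticAt_const) hpole).add
      (analyticAt_const.mul (hθan.deriv.div hθan hθ))
  refine hlog.congr ?_
  filter_upwards [continuous_re.continuousAt.eventually_const_lt hμ] with x hx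
    using (v2_eq_add_logDeriv q₀ hx).symm

lemma v2_inv {q₀ μ : ℂ} (hq₀ : q₀ ≠ 0) (hμ : 0 < μ.re) (hpole : μ + q₀⁻¹ ≠ 0)
    (hθ : theta 0 0 μ ≠ 0) : v2 q₀ μ⁻¹ = -(μ ^ 2 * v2 q₀⁻¹ μ) := by
  have hμ0 := ne_zero_of_re_pos hμ
  have hlog : logDeriv (theta 0 0) μ⁻¹ = -μ / 2 - μ ^ 2 * logDeriv (theta 0 0) μ := by
    simpa only [neg_zero] using logDeriv_theta_inv 0 0 hμ (by rwa [neg_zero])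
  have hfrac : 1 / (μ⁻¹ + q₀) = μ - μ ^ 2 * (1 / (μ + q₀⁻¹)) := by
    have hden : μ + q₀⁻¹ = (μ * q₀ + 1) / q₀ := by field_simp
    have hden' : μ⁻¹ + q₀ = (μ * q₀ + 1) / μ := by field_simp; ring
    have hnum : μ * q₀ + 1 ≠ 0 := fun h => hpole (by rw [hden, h, zero_div])
    rw [hden, hden']
    field_simp
    ring
  rw [v2_eq_add_logDeriv _ (inv_re_pos hμ), v2_eq_add_logDeriv _ hμ, hlog, hfrac]
  ring

end ThetaInversion

theorem statement13_general (n : ℕ) {q₀ μ : ℂ} (hq₀ : q₀ ≠ 0) (hμ : 0 < μ.re)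
    (hpole : μ + 1 / q₀ ≠ 0) (hθ : theta 0 0 μ ≠ 0) :
    iteratedDeriv n (v2 q₀) (1 / μ) = (-1) ^ (n + 1) * ∑ k ∈ Finset.range (n + 1),
      lah 2 n k * μ ^ (2 + n + k) * iteratedDeriv k (v2 (1 / q₀)) μ := by
  rw [one_div] at hpole ⊢
  rw [one_div]
  have hμ0 := Complex.ne_zero_of_re_pos hμ
  have hcont : ContinuousAt (fun x : ℂ => x⁻¹) μ⁻¹ := continuousAt_inv₀ (inv_ne_zero hμ0)
  have hinversion : v2 q₀ =ᶠ[nhds μ⁻¹] fun x => -(x⁻¹ ^ 2 • v2 q₀⁻¹ x⁻¹) := by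
    have hgood : ∀ᶠ y in nhds μ, 0 < y.re ∧ y + q₀⁻¹ ≠ 0 ∧ theta 0 0 y ≠ 0 :=
      (Complex.continuous_re.continuousAt.eventually_const_lt hμ).and
        (((continuousAt_id.add continuousAt_const).eventually_ne hpole).and
          ((hasDerivAt_theta 0 0 hμ).continuousAt.eventually_ne hθ))
    rw [← inv_inv μ] at hgood
    filter_upwards [hcont.eventually hgood] with x ⟨hx, hxpole, hxθ⟩
    simpa only [inv_inv, smul_eq_mul] using v2_inv hq₀ hx hxpole hxθ
  have hg : AnalyticAt ℂ (v2 q₀⁻¹) μ⁻¹⁻¹ := by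
    rw [inv_inv]; exact analyticAt_v2 hμ hpole hθ
  rw [hinversion.iteratedDeriv_eq, iteratedDeriv_fun_neg,
    iteratedDeriv_inv_pow_smul_comp_inv 2 n (inv_ne_zero hμ0) hg]
  simp only [inv_inv, smul_eq_mul, pow_succ, mul_neg, mul_one, neg_mul, mul_assoc]

/-- Lemma 6.3: behavior of `w₂[q₀]` and its μ-derivatives up to order 4 under
`iμ ↦ i/μ`, expressed through `w₂[1/q₀]`. -/
theorem statement13 (q0 : ℝ) (hq0 : 0 < q0) (μ : ℂ) (hμ : 0 < μ.re)
    (h2 : ∀ ν : ℂ, 0 < ν.re → theta (1 / 2) 0 ν ≠ 0)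
    (h3 : ∀ ν : ℂ, 0 < ν.re → theta 0 0 ν ≠ 0)
    (h4 : ∀ ν : ℂ, 0 < ν.re → theta 0 (1 / 2) ν ≠ 0) :
    v2 (q0 : ℂ) (1 / μ) = -μ ^ 2 * v2 (1 / (q0 : ℂ)) μ ∧
    iteratedDeriv 1 (v2 (q0 : ℂ)) (1 / μ) =
        μ ^ 4 * iteratedDeriv 1 (v2 (1 / (q0 : ℂ))) μ + 2 * μ ^ 3 * v2 (1 / (q0 : ℂ)) μ ∧
    iteratedDeriv 2 (v2 (q0 : ℂ)) (1 / μ) =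
        -μ ^ 6 * iteratedDeriv 2 (v2 (1 / (q0 : ℂ))) μ -
          6 * μ ^ 5 * iteratedDeriv 1 (v2 (1 / (q0 : ℂ))) μ - 6 * μ ^ 4 * v2 (1 / (q0 : ℂ)) μ ∧
    iteratedDeriv 3 (v2 (q0 : ℂ)) (1 / μ) =
        μ ^ 8 * iteratedDeriv 3 (v2 (1 / (q0 : ℂ))) μ +
          12 * μ ^ 7 * iteratedDeriv 2 (v2 (1 / (q0 : ℂ))) μ +
          36 * μ ^ 6 * iteratedDeriv 1 (v2 (1 / (q0 : ℂ))) μ + 24 * μ ^ 5 * v2 (1 / (q0 : ℂ)) μ ∧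
    iteratedDeriv 4 (v2 (q0 : ℂ)) (1 / μ) =
        -μ ^ 10 * iteratedDeriv 4 (v2 (1 / (q0 : ℂ))) μ -
          20 * μ ^ 9 * iteratedDeriv 3 (v2 (1 / (q0 : ℂ))) μ -
          120 * μ ^ 8 * iteratedDeriv 2 (v2 (1 / (q0 : ℂ))) μ -
          240 * μ ^ 7 * iteratedDeriv 1 (v2 (1 / (q0 : ℂ))) μ -
          120 * μ ^ 6 * v2 (1 / (q0 : ℂ)) μ := by
  have hpole : μ + 1 / (q0 : ℂ) ≠ 0 := by
    refine Complex.ne_zero_of_re_pos ?_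
    rw [← Complex.ofReal_one, ← Complex.ofReal_div, Complex.add_re, Complex.ofReal_re]
    positivity
  have h (n : ℕ) := statement13_general n (Complex.ofReal_ne_zero.2 hq0.ne') hμ hpole (h3 μ hμ)
  refine ⟨by simpa [lah] using h 0, ?_, ?_, ?_, ?_⟩ <;> rw [h] <;>
    norm_num [Finset.sum_range_succ, lah, Nat.choose, Nat.ascFactorial] <;> ring

end
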